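/- arXiv:1206.6598 — 2 statements merged into one kernel-verified Lean document; each statement's English description precedes it below -/
import Mathlib

section
/- Let ψ be a spherically symmetric solution of the wave equation on extremal Reissner–Nordström of mass M > 0, and set H₀ = (∂ᵣψ)(0, M) + (1/M)·ψ(0, M). If ψ(v, M) → 0 as v → +∞, then (∂ᵣ²ψ)(v, M)/v → −H₀/M² as v → +∞; in particular, if H₀ ≠ 0 then |(∂ᵣ²ψ)(v, M)| → +∞ as v → +∞ (blow-up of the second transversal derivative along the extremal horizon). -/
/-!
On the horizon `r = M` both `D` and `D'` vanish, so the wave equation reduces to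
`∂ᵥ(∂ᵣψ + ψ/M) = 0`: the quantity `∂ᵣψ + ψ/M` equals `H₀` for all `v`
(`horizon_conservation`). Differentiating the equation once in `r` at `r = M`, where
`D'' = 2/M²`, gives the transport equation
`∂ᵥ(∂ᵣ²ψ + ∂ᵣψ/M − ψ/M²) = −∂ᵣψ/M²` (`horizon_transport`). By the conservation law the
right-hand side is `−H₀/M² + ψ/M³`, which tends to `−H₀/M²`; hence the quantity under `∂ᵥ`
grows like `−H₀ v/M²` (`tendsto_div_of_hasDerivAt`), and so does `∂ᵣ²ψ`, since `ψ` and `∂ᵣψ`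
stay bounded along the horizon.
-/

noncomputable section

open Real Set Filter

/-- Partial derivative in the first slot (`v`) of a function of two real variables. -/
def pv (u : ℝ → ℝ → ℝ) : ℝ → ℝ → ℝ := fun v r => deriv (fun t => u t r) v

/-- Partial derivative in the second slot (`r`) of a function of two real variables. -/
def pr (u : ℝ → ℝ → ℝ) : ℝ → ℝ → ℝ := fun v r => deriv (fun t => u v t) r

/-- The metric coefficient `D(r) = (1 − M/r)²` of extremal Reissner–Nordström of mass `M`. -/
def RN (M : ℝ) : ℝ → ℝ := fun r => (1 - M / r) ^ 2

/-- A spherically symmetric solution of the wave equation on extremal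
Reissner–Nordström of mass `M`: a smooth function `ψ(v,r)` on `ℝ × (0,∞)` with
`D(r)·∂ᵣ²ψ + 2·∂ᵥ∂ᵣψ + (2/r)·∂ᵥψ + (D'(r) + 2D(r)/r)·∂ᵣψ = 0`. -/
def IsRNSphericalWaveSol (M : ℝ) (ψ : ℝ → ℝ → ℝ) : Prop :=
  ContDiffOn ℝ (⊤ : ℕ∞) (fun p : ℝ × ℝ => ψ p.1 p.2) (univ ×ˢ Ioi 0) ∧
  ∀ v : ℝ, ∀ r ∈ Ioi (0 : ℝ),
    RN M r * pr (pr ψ) v r + 2 * pv (pr ψ) v r + (2 / r) * pv ψ v r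
      + (deriv (RN M) r + 2 * RN M r / r) * pr ψ v r = 0

/-- Smoothness on `ℝ × (0,∞)` of a function given in curried form. -/
def SmoothExt (u : ℝ → ℝ → ℝ) : Prop :=
  ContDiffOn ℝ (⊤ : ℕ∞) (fun p : ℝ × ℝ => u p.1 p.2) (univ ×ˢ Ioi 0)

lemma isOpen_ext : IsOpen ((univ : Set ℝ) ×ˢ Ioi (0 : ℝ)) := isOpen_univ.prod isOpen_Ioi

lemma SmoothExt.contDiffAt {u : ℝ → ℝ → ℝ} (hu : SmoothExt u) (v : ℝ) {r : ℝ} (hr : 0 < r) :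
    ContDiffAt ℝ (⊤ : ℕ∞) (fun p : ℝ × ℝ => u p.1 p.2) (v, r) :=
  ContDiffOn.contDiffAt hu (isOpen_ext.mem_nhds ⟨mem_univ _, hr⟩)

lemma SmoothExt.hasFDerivAt {u : ℝ → ℝ → ℝ} (hu : SmoothExt u) (v : ℝ) {r : ℝ} (hr : 0 < r) :
    HasFDerivAt (fun p : ℝ × ℝ => u p.1 p.2)
      (fderiv ℝ (fun p : ℝ × ℝ => u p.1 p.2) (v, r)) (v, r) :=
  ((hu.contDiffAt v hr).differentiableAt (by simp)).hasFDerivAt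

lemma SmoothExt.hasDerivAt_v_fderiv {u : ℝ → ℝ → ℝ} (hu : SmoothExt u) (v : ℝ) {r : ℝ}
    (hr : 0 < r) : HasDerivAt (fun t => u t r)
      (fderiv ℝ (fun p : ℝ × ℝ => u p.1 p.2) (v, r) (1, 0)) v :=
  (hu.hasFDerivAt v hr).comp_hasDerivAt (f := fun t : ℝ => (t, r)) v
    ((hasDerivAt_id v).prodMk (hasDerivAt_const v r))

lemma SmoothExt.hasDerivAt_r_fderiv {u : ℝ → ℝ → ℝ} (hu : SmoothExt u) (v : ℝ) {r : ℝ}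
    (hr : 0 < r) : HasDerivAt (fun t => u v t)
      (fderiv ℝ (fun p : ℝ × ℝ => u p.1 p.2) (v, r) (0, 1)) r :=
  (hu.hasFDerivAt v hr).comp_hasDerivAt (f := fun t : ℝ => (v, t)) r
    ((hasDerivAt_const r v).prodMk (hasDerivAt_id r))

lemma SmoothExt.pv_eq {u : ℝ → ℝ → ℝ} (hu : SmoothExt u) (v : ℝ) {r : ℝ} (hr : 0 < r) :
    pv u v r = fderiv ℝ (fun p : ℝ × ℝ => u p.1 p.2) (v, r) (1, 0) :=
  (hu.hasDerivAt_v_fderiv v hr).deriv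

lemma SmoothExt.pr_eq {u : ℝ → ℝ → ℝ} (hu : SmoothExt u) (v : ℝ) {r : ℝ} (hr : 0 < r) :
    pr u v r = fderiv ℝ (fun p : ℝ × ℝ => u p.1 p.2) (v, r) (0, 1) :=
  (hu.hasDerivAt_r_fderiv v hr).deriv

lemma SmoothExt.hasDerivAt_v {u : ℝ → ℝ → ℝ} (hu : SmoothExt u) (v : ℝ) {r : ℝ}
    (hr : 0 < r) : HasDerivAt (fun t => u t r) (pv u v r) v :=
  hu.pv_eq v hr ▸ hu.hasDerivAt_v_fderiv v hr

lemma SmoothExt.hasDerivAt_r {u : ℝ → ℝ → ℝ} (hu : SmoothExt u) (v : ℝ) {r : ℝ}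
    (hr : 0 < r) : HasDerivAt (fun t => u v t) (pr u v r) r :=
  hu.pr_eq v hr ▸ hu.hasDerivAt_r_fderiv v hr

lemma SmoothExt.contDiffOn_fderiv {u : ℝ → ℝ → ℝ} (hu : SmoothExt u) :
    ContDiffOn ℝ (⊤ : ℕ∞) (fderiv ℝ (fun p : ℝ × ℝ => u p.1 p.2)) (univ ×ˢ Ioi 0) :=
  ContDiffOn.fderiv_of_isOpen hu isOpen_ext (by simp)

lemma SmoothExt.pv {u : ℝ → ℝ → ℝ} (hu : SmoothExt u) : SmoothExt (pv u) :=
  (hu.contDiffOn_fderiv.clm_apply contDiffOn_const).congr fun p hp => hu.pv_eq p.1 hp.2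

lemma SmoothExt.pr {u : ℝ → ℝ → ℝ} (hu : SmoothExt u) : SmoothExt (pr u) :=
  (hu.contDiffOn_fderiv.clm_apply contDiffOn_const).congr fun p hp => hu.pr_eq p.1 hp.2

/-- Symmetry of second partial derivatives. -/
lemma SmoothExt.pr_pv {u : ℝ → ℝ → ℝ} (hu : SmoothExt u) (v : ℝ) {r : ℝ} (hr : 0 < r) :
    _root_.pr (_root_.pv u) v r = _root_.pv (_root_.pr u) v r := by
  have hsymm : IsSymmSndFDerivAt ℝ (fun p : ℝ × ℝ => u p.1 p.2) (v, r) :=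
    (hu.contDiffAt v hr).isSymmSndFDerivAt (by
      rw [minSmoothness_of_isRCLikeNormedField]; exact WithTop.coe_le_coe.2 le_top)
  have hd : HasFDerivAt (fderiv ℝ (fun p : ℝ × ℝ => u p.1 p.2))
      (fderiv ℝ (fderiv ℝ (fun p : ℝ × ℝ => u p.1 p.2)) (v, r)) (v, r) :=
    ((hu.contDiffOn_fderiv.contDiffAt (x := (v, r))
      (isOpen_ext.mem_nhds ⟨mem_univ _, hr⟩)).differentiableAt
      (by simp)).hasFDerivAt
  have h1 : HasDerivAt (fun t => _root_.pv u v t)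
      (fderiv ℝ (fderiv ℝ (fun p : ℝ × ℝ => u p.1 p.2)) (v, r) (0, 1) (1, 0)) r := by
    have h := (hd.comp_hasDerivAt (f := fun t : ℝ => (v, t)) r
      ((hasDerivAt_const r v).prodMk (hasDerivAt_id r))).clm_apply
        (hasDerivAt_const r ((1, 0) : ℝ × ℝ))
    simp only [map_zero, add_zero] at h
    refine h.congr_of_eventuallyEq ?_
    filter_upwards [Ioi_mem_nhds hr] with t ht using hu.pv_eq v ht
  have h2 : HasDerivAt (fun t => _root_.pr u t r)
      (fderiv ℝ (fderiv ℝ (fun p : ℝ × ℝ => u p.1 p.2)) (v, r) (1, 0) (0, 1)) v := by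
    have h := (hd.comp_hasDerivAt (f := fun t : ℝ => (t, r)) v
      ((hasDerivAt_id v).prodMk (hasDerivAt_const v r))).clm_apply
        (hasDerivAt_const v ((0, 1) : ℝ × ℝ))
    simp only [map_zero, add_zero] at h
    refine h.congr_of_eventuallyEq (Eventually.of_forall fun t => hu.pr_eq t hr)
  exact h1.deriv.trans ((hsymm.eq _ _).trans h2.deriv.symm)

lemma hasDerivAt_one_sub_div (M : ℝ) {r : ℝ} (hr : 0 < r) :
    HasDerivAt (fun t => 1 - M / t) (M / r ^ 2) r := by
  have h := ((hasDerivAt_inv hr.ne').const_mul M).const_sub 1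
  have e : (fun t => 1 - M / t) = fun t => 1 - M * t⁻¹ := by
    funext t; rw [div_eq_mul_inv]
  rw [e]
  exact h.congr_deriv (by field_simp)

lemma deriv_RN (M : ℝ) {r : ℝ} (hr : 0 < r) :
    deriv (RN M) r = 2 * (1 - M / r) * (M / r ^ 2) := by
  have h := (hasDerivAt_one_sub_div M hr).pow 2
  have hRN : HasDerivAt (RN M) (2 * (1 - M / r) * (M / r ^ 2)) r := by
    refine h.congr_deriv ?_
    simp
  exact hRN.deriv

/-- The wave equation restricted to the horizon: the quantity `∂ᵣψ + ψ/M` is conserved. -/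
lemma horizon_conservation {M : ℝ} (hM : 0 < M) {ψ : ℝ → ℝ → ℝ}
    (hψ : IsRNSphericalWaveSol M ψ) (v : ℝ) :
    pr ψ v M + (1 / M) * ψ v M = pr ψ 0 M + (1 / M) * ψ 0 M := by
  have hs : SmoothExt ψ := hψ.1
  have hd : ∀ t, HasDerivAt (fun t => pr ψ t M + (1 / M) * ψ t M) 0 t := by
    intro t
    refine ((hs.pr.hasDerivAt_v t hM).add ((hs.hasDerivAt_v t hM).const_mul (1 / M))).congr_deriv ?_
    have h := hψ.2 t M hM
    rw [deriv_RN M hM] at h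
    simp only [RN, div_self hM.ne', sub_self] at h
    linear_combination h / 2
  exact is_const_of_deriv_eq_zero (fun t => (hd t).differentiableAt) (fun t => (hd t).deriv) v 0

/-- The `r`-derivative of the wave equation on the horizon, as a transport equation along it. -/
lemma horizon_transport {M : ℝ} (hM : 0 < M) {ψ : ℝ → ℝ → ℝ}
    (hψ : IsRNSphericalWaveSol M ψ) (v : ℝ) :
    HasDerivAt (fun t => pr (pr ψ) t M + (1 / M) * pr ψ t M - (1 / M ^ 2) * ψ t M)
      (-(pr ψ v M) / M ^ 2) v := by
  have hs : SmoothExt ψ := hψ.1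
  refine (((hs.pr.pr.hasDerivAt_v v hM).add ((hs.pr.hasDerivAt_v v hM).const_mul (1 / M))).sub
    ((hs.hasDerivAt_v v hM).const_mul (1 / M ^ 2))).congr_deriv ?_
  have hinv := hasDerivAt_inv hM.ne'
  have hf := hasDerivAt_one_sub_div M hM
  -- The left-hand side of the equation, with `D` and its derivative explicit, differentiated at `r = M`.
  have hE := (((((hf.mul hf).mul (hs.pr.pr.hasDerivAt_r v hM)).add
    ((hs.pr.pv.hasDerivAt_r v hM).const_mul 2)).add
    ((hinv.const_mul 2).mul (hs.pv.hasDerivAt_r v hM))).add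
    (((hf.mul ((hinv.mul hinv).const_mul (2 * M))).add
      ((hf.mul hf).mul (hinv.const_mul 2))).mul (hs.pr.hasDerivAt_r v hM)))
  have h0 := hE.unique ((hasDerivAt_const M (0 : ℝ)).congr_of_eventuallyEq (by
    filter_upwards [Ioi_mem_nhds hM] with r hr
    have h := hψ.2 v r hr
    rw [deriv_RN M hr] at h
    simp only [RN] at h
    simp only [Pi.add_apply, Pi.mul_apply]
    rw [← h]
    have : r ≠ 0 := ne_of_gt hr
    field_simp))
  simp only [Pi.add_apply, Pi.mul_apply, div_self hM.ne', sub_self] at h0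
  rw [hs.pr.pr_pv v hM, hs.pr_pv v hM] at h0
  have hM' := hM.ne'
  field_simp at h0 ⊢
  linear_combination h0 / 2

/-- A function whose derivative tends to `c` at `+∞` is asymptotic to `c v`, in the sense that
its quotient by `v` tends to `c`. -/
lemma tendsto_div_of_hasDerivAt {f f' : ℝ → ℝ} {c : ℝ} (hf : ∀ v, HasDerivAt f (f' v) v)
    (hc : Tendsto f' atTop (nhds c)) : Tendsto (fun v => f v / v) atTop (nhds c) := by
  rw [Metric.tendsto_atTop]
  intro ε hε
  obtain ⟨a, ha⟩ := Metric.tendsto_atTop.1 hc (ε / 2) (half_pos hε)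
  have hg : ∀ v, HasDerivAt (fun t => f t - c * t) (f' v - c) v := fun v =>
    ((hf v).sub ((hasDerivAt_id v).const_mul c)).congr_deriv (by simp)
  have hb : ∀ v, a ≤ v → ‖(f v - c * v) - (f a - c * a)‖ ≤ ε / 2 * ‖v - a‖ := fun v hv =>
    (convex_Ici a).norm_image_sub_le_of_norm_hasDerivWithin_le (f := fun t => f t - c * t)
      (fun x _ => (hg x).hasDerivWithinAt)
      (fun x hx => by rw [← dist_eq_norm]; exact (ha x hx).le) self_mem_Ici hv
  refine ⟨max (max a 1) (2 * (|f a - c * a| + ε / 2 * |a|) / ε + 1), fun v hv => ?_⟩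
  have hva : a ≤ v := le_trans (le_trans (le_max_left _ _) (le_max_left _ _)) hv
  have hv1 : 1 ≤ v := le_trans (le_trans (le_max_right _ _) (le_max_left _ _)) hv
  have hv2 : 2 * (|f a - c * a| + ε / 2 * |a|) / ε < v :=
    lt_of_lt_of_le (lt_add_one _) (le_trans (le_max_right _ _) hv)
  have hv0 : 0 < v := by linarith
  rw [div_lt_iff₀ hε] at hv2
  have h := hb v hva
  rw [Real.norm_eq_abs, Real.norm_eq_abs, abs_of_nonneg (sub_nonneg.2 hva)] at h
  have h3 := abs_sub_abs_le_abs_sub (f v - c * v) (f a - c * a)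
  have h4 : |f v - c * v| < ε * v := by
    nlinarith [neg_abs_le a]
  rw [Real.dist_eq, show f v / v - c = (f v - c * v) / v by field_simp, abs_div,
    abs_of_pos hv0, div_lt_iff₀ hv0]
  exact h4

/-- **Blow-up of the second transversal derivative along the extremal
Reissner–Nordström horizon.** Set `H₀ = (∂ᵣψ)(0, M) + (1/M)·ψ(0, M)`. If
`ψ(v, M) → 0` as `v → +∞`, then `(∂ᵣ²ψ)(v, M)/v → −H₀/M²`; in particular, if
`H₀ ≠ 0` then `|(∂ᵣ²ψ)(v, M)| → +∞` as `v → +∞`. -/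
theorem blowup_second_transversal_derivative_extremal_RN
    (M : ℝ) (hM : 0 < M) (ψ : ℝ → ℝ → ℝ) (hψ : IsRNSphericalWaveSol M ψ)
    (H₀ : ℝ) (hH₀ : H₀ = pr ψ 0 M + (1 / M) * ψ 0 M)
    (hdecay : Tendsto (fun v => ψ v M) atTop (nhds 0)) :
    Tendsto (fun v => pr (pr ψ) v M / v) atTop (nhds (-H₀ / M ^ 2)) ∧
      (H₀ ≠ 0 → Tendsto (fun v => |pr (pr ψ) v M|) atTop atTop) := by
  have hcons : ∀ v, pr ψ v M = H₀ - (1 / M) * ψ v M := fun v => by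
    rw [hH₀, ← horizon_conservation hM hψ v]; ring
  have hpr : Tendsto (fun v => pr ψ v M) atTop (nhds H₀) := by
    simp only [hcons]
    simpa using tendsto_const_nhds.sub (hdecay.const_mul (1 / M))
  have hG := tendsto_div_of_hasDerivAt (horizon_transport hM hψ) (hpr.neg.div_const (M ^ 2))
  have hlim : Tendsto (fun v => pr (pr ψ) v M / v) atTop (nhds (-H₀ / M ^ 2)) := by
    have h := (hG.sub ((hpr.const_mul (1 / M)).div_atTop tendsto_id)).add
      ((hdecay.const_mul (1 / M ^ 2)).div_atTop tendsto_id)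
    rw [sub_zero, add_zero] at h
    refine h.congr fun v => ?_
    simp only [id]
    ring
  refine ⟨hlim, fun hne => ?_⟩
  have hpos : 0 < |-H₀ / M ^ 2| := abs_pos.2 (div_ne_zero (neg_ne_zero.2 hne) (by positivity))
  refine (hlim.abs.pos_mul_atTop hpos tendsto_id).congr' ?_
  filter_upwards [eventually_gt_atTop 0] with v hv
  rw [abs_div, abs_of_pos hv, id, div_mul_cancel₀ _ hv.ne']
end
end

section
/- For every M > 0 and every l ∈ ℕ there exist real constants α and β₀, β₁, …, β_l, depending only on M and l, such that the following holds: for every axisymmetric solution ψ of the wave equation on extremal Kerr of mass M whose partial derivatives up to order l+2 are bounded, and for every smooth E_l : (0,π) → ℝ, bounded with all derivatives bounded, satisfying (1/sinθ)·(sinθ·E_l'(θ))' = −l(l+1)·E_l(θ), the function v ↦ ∫₀^π (∂ᵣ^{l+1}ψ + α·sin²θ·∂ᵥ∂ᵣ^{l}ψ + Σ_{i=0}^{l} βᵢ·∂ᵣ^{i}ψ)(v, M, θ)·E_l(θ)·sinθ dθ is constant on ℝ (hierarchy of conservation laws along the extremal Kerr horizon). -/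
/-!
Commuting the axisymmetric wave equation with `∂ᵣˡ` and restricting to `r = M` gives
`∂ᵥ(M² sin²θ ∂ᵥ∂ᵣˡψ + 4M² ∂ᵣˡ⁺¹ψ + 2(2l+1)M ∂ᵣˡψ + 2l² ∂ᵣˡ⁻¹ψ) + l(l+1) ∂ᵣˡψ + Δ_{S²}∂ᵣˡψ = 0`
(`commuted_wave`): since `Δ(r) = (r-M)²` has a double zero at the horizon, the terms
`Δ ∂ᵣ²ψ + Δ' ∂ᵣψ` leave only `l(l+1) ∂ᵣˡψ`. Paired with `E sin θ`, the last two terms become the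
total derivative of the Wronskian-type expression `sin θ (E ∂_θ∂ᵣˡψ - E' ∂ᵣˡψ)`, because `E` has
eigenvalue `-l(l+1)`. All factors being bounded, this expression vanishes at both poles, so its
derivative integrates to zero (`integral_deriv_sin_mul_eq_zero`). Dividing by `4M²` yields
`α = 1/4`, `β_l = (2l+1)/(2M)`, `β_{l-1} = l²/(2M²)`, the other coefficients being zero.
Differentiation under the integral sign is justified by the uniform bounds on derivatives up to
order `l+2`.
-/

noncomputable section

open Real Set Filter

/-- Partial derivative of a function of four real variables `(v, r, θ, φ)` in the
direction indexed by `μ` (`0 = v`, `1 = r`, `2 = θ`, `3 = φ`). -/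
def pder (μ : Fin 4) (f : ℝ → ℝ → ℝ → ℝ → ℝ) : ℝ → ℝ → ℝ → ℝ → ℝ :=
  fun v r θ φ =>
    if μ = 0 then deriv (fun t => f t r θ φ) v
    else if μ = 1 then deriv (fun t => f v t θ φ) r
    else if μ = 2 then deriv (fun t => f v r t φ) θ
    else deriv (fun t => f v r θ t) φ

/-- The extremal Kerr wave operator `ρ²·□_g ψ` of mass `M`, in ingoing
Eddington–Finkelstein coordinates `(v, r, θ, φ)`, with `Δ(r) = (r−M)²`. -/
def kerrWaveOp (M : ℝ) (ψ : ℝ → ℝ → ℝ → ℝ → ℝ) (v r θ φ : ℝ) : ℝ :=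
  M ^ 2 * sin θ ^ 2 * pder 0 (pder 0 ψ) v r θ φ
    + 2 * (r ^ 2 + M ^ 2) * pder 0 (pder 1 ψ) v r θ φ
    + (r - M) ^ 2 * pder 1 (pder 1 ψ) v r θ φ
    + 2 * M * pder 0 (pder 3 ψ) v r θ φ
    + 2 * M * pder 1 (pder 3 ψ) v r θ φ
    + 2 * r * pder 0 ψ v r θ φ
    + 2 * (r - M) * pder 1 ψ v r θ φ
    + deriv (fun t => sin t * pder 2 ψ v r t φ) θ / sin θ
    + pder 3 (pder 3 ψ) v r θ φ / sin θ ^ 2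

/-- A solution of the wave equation on extremal Kerr of mass `M`: a smooth function
`ψ(v,r,θ,φ)` on `ℝ × (0,∞) × (0,π) × ℝ`, `2π`-periodic in `φ`, with all partial
derivatives up to third order bounded, satisfying `ρ²·□_g ψ = 0`. -/
structure IsKerrWaveSol (M : ℝ) (ψ : ℝ → ℝ → ℝ → ℝ → ℝ) : Prop where
  smooth : ContDiffOn ℝ (⊤ : ℕ∞) (fun p : ℝ × ℝ × ℝ × ℝ => ψ p.1 p.2.1 p.2.2.1 p.2.2.2)
    (univ ×ˢ Ioi 0 ×ˢ Ioo 0 π ×ˢ univ)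
  periodic : ∀ v r θ φ, ψ v r θ (φ + 2 * π) = ψ v r θ φ
  bounded : ∃ C : ℝ, ∀ L : List (Fin 4), L.length ≤ 3 →
    ∀ v : ℝ, ∀ r ∈ Ioi (0 : ℝ), ∀ θ ∈ Ioo 0 π, ∀ φ : ℝ,
      |(L.foldr pder ψ) v r θ φ| ≤ C
  wave : ∀ v : ℝ, ∀ r ∈ Ioi (0 : ℝ), ∀ θ ∈ Ioo 0 π, ∀ φ : ℝ,
    kerrWaveOp M ψ v r θ φ = 0

/-- The conserved quantity `H₀[ψ]` along the extremal Kerr horizon `{r = M}`. -/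
def H0Kerr (M : ℝ) (ψ : ℝ → ℝ → ℝ → ℝ → ℝ) : ℝ :=
  ∫ φ in (0:ℝ)..(2 * π), ∫ θ in (0:ℝ)..π,
    (M * sin θ ^ 2 * pder 0 ψ 0 M θ φ + 4 * M * pder 1 ψ 0 M θ φ + 2 * ψ 0 M θ φ) * sin θ

/-! ### Coordinate derivatives of smooth functions -/

/-- The coordinate domain `ℝ × (0,∞) × (0,π) × ℝ`. -/
def kerrDom : Set (ℝ × ℝ × ℝ × ℝ) := univ ×ˢ Ioi 0 ×ˢ Ioo 0 π ×ˢ univ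

/-- The function on `ℝ⁴` corresponding to a curried function of `(v, r, θ, φ)`. -/
def unc (f : ℝ → ℝ → ℝ → ℝ → ℝ) : ℝ × ℝ × ℝ × ℝ → ℝ :=
  fun p => f p.1 p.2.1 p.2.2.1 p.2.2.2

/-- Smoothness on the coordinate domain. -/
def SmoothK (f : ℝ → ℝ → ℝ → ℝ → ℝ) : Prop := ContDiffOn ℝ (⊤ : ℕ∞) (unc f) kerrDom

/-- The coordinate basis vectors of `ℝ⁴`, in the order `(v, r, θ, φ)`. -/
def coordVec (μ : Fin 4) : ℝ × ℝ × ℝ × ℝ :=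
  if μ = 0 then (1, 0, 0, 0) else if μ = 1 then (0, 1, 0, 0)
  else if μ = 2 then (0, 0, 1, 0) else (0, 0, 0, 1)

lemma two_le_smooth : (2 : WithTop ℕ∞) ≤ ((⊤ : ℕ∞) : WithTop ℕ∞) :=
  show ((2 : ℕ∞) : WithTop ℕ∞) ≤ _ from WithTop.coe_le_coe.2 le_top

lemma isOpen_kerrDom : IsOpen kerrDom :=
  isOpen_univ.prod (isOpen_Ioi.prod (isOpen_Ioo.prod isOpen_univ))

lemma mem_kerrDom {v r θ φ : ℝ} (hr : 0 < r) (hθ : θ ∈ Ioo 0 π) : (v, r, θ, φ) ∈ kerrDom :=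
  ⟨mem_univ _, hr, hθ, mem_univ _⟩

lemma SmoothK.contDiffAt {f : ℝ → ℝ → ℝ → ℝ → ℝ} (hf : SmoothK f) {p : ℝ × ℝ × ℝ × ℝ}
    (hp : p ∈ kerrDom) : ContDiffAt ℝ (⊤ : ℕ∞) (unc f) p :=
  ContDiffOn.contDiffAt hf (isOpen_kerrDom.mem_nhds hp)

lemma SmoothK.hasFDerivAt {f : ℝ → ℝ → ℝ → ℝ → ℝ} (hf : SmoothK f) {p : ℝ × ℝ × ℝ × ℝ}
    (hp : p ∈ kerrDom) : HasFDerivAt (unc f) (fderiv ℝ (unc f) p) p :=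
  ((hf.contDiffAt hp).differentiableAt (by simp)).hasFDerivAt

lemma SmoothK.slice0 {f : ℝ → ℝ → ℝ → ℝ → ℝ} (hf : SmoothK f) {v r θ φ : ℝ}
    (hp : (v, r, θ, φ) ∈ kerrDom) :
    HasDerivAt (fun t => f t r θ φ) (fderiv ℝ (unc f) (v, r, θ, φ) (coordVec 0)) v := by
  have hc : HasDerivAt (fun t : ℝ => (t, r, θ, φ)) (coordVec 0) v :=
    (hasDerivAt_id v).prodMk (hasDerivAt_const v (r, θ, φ))
  exact (hf.hasFDerivAt hp).comp_hasDerivAt v hc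

lemma SmoothK.slice1 {f : ℝ → ℝ → ℝ → ℝ → ℝ} (hf : SmoothK f) {v r θ φ : ℝ}
    (hp : (v, r, θ, φ) ∈ kerrDom) :
    HasDerivAt (fun t => f v t θ φ) (fderiv ℝ (unc f) (v, r, θ, φ) (coordVec 1)) r := by
  have hc : HasDerivAt (fun t : ℝ => (v, t, θ, φ)) (coordVec 1) r :=
    (hasDerivAt_const r v).prodMk ((hasDerivAt_id r).prodMk (hasDerivAt_const r (θ, φ)))
  exact (hf.hasFDerivAt hp).comp_hasDerivAt r hc

lemma SmoothK.slice2 {f : ℝ → ℝ → ℝ → ℝ → ℝ} (hf : SmoothK f) {v r θ φ : ℝ}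
    (hp : (v, r, θ, φ) ∈ kerrDom) :
    HasDerivAt (fun t => f v r t φ) (fderiv ℝ (unc f) (v, r, θ, φ) (coordVec 2)) θ := by
  have hc : HasDerivAt (fun t : ℝ => (v, r, t, φ)) (coordVec 2) θ :=
    (hasDerivAt_const θ v).prodMk ((hasDerivAt_const θ r).prodMk
      ((hasDerivAt_id θ).prodMk (hasDerivAt_const θ φ)))
  exact (hf.hasFDerivAt hp).comp_hasDerivAt θ hc

lemma SmoothK.slice3 {f : ℝ → ℝ → ℝ → ℝ → ℝ} (hf : SmoothK f) {v r θ φ : ℝ}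
    (hp : (v, r, θ, φ) ∈ kerrDom) :
    HasDerivAt (fun t => f v r θ t) (fderiv ℝ (unc f) (v, r, θ, φ) (coordVec 3)) φ := by
  have hc : HasDerivAt (fun t : ℝ => (v, r, θ, t)) (coordVec 3) φ :=
    (hasDerivAt_const φ v).prodMk ((hasDerivAt_const φ r).prodMk
      ((hasDerivAt_const φ θ).prodMk (hasDerivAt_id φ)))
  exact (hf.hasFDerivAt hp).comp_hasDerivAt φ hc

lemma SmoothK.pder_eq {f : ℝ → ℝ → ℝ → ℝ → ℝ} (hf : SmoothK f) (μ : Fin 4)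
    {p : ℝ × ℝ × ℝ × ℝ} (hp : p ∈ kerrDom) :
    unc (pder μ f) p = fderiv ℝ (unc f) p (coordVec μ) := by
  obtain ⟨v, r, θ, φ⟩ := p
  fin_cases μ
  · exact (hf.slice0 hp).deriv
  · exact (hf.slice1 hp).deriv
  · exact (hf.slice2 hp).deriv
  · exact (hf.slice3 hp).deriv

lemma SmoothK.pder {f : ℝ → ℝ → ℝ → ℝ → ℝ} (hf : SmoothK f) (μ : Fin 4) :
    SmoothK (pder μ f) := by
  have h : ContDiffOn ℝ (⊤ : ℕ∞) (fun p => fderiv ℝ (unc f) p (coordVec μ)) kerrDom :=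
    (ContDiffOn.fderiv_of_isOpen hf isOpen_kerrDom (by simp)).clm_apply contDiffOn_const
  exact h.congr fun p hp => hf.pder_eq μ hp

lemma SmoothK.iterate {f : ℝ → ℝ → ℝ → ℝ → ℝ} (hf : SmoothK f) (μ : Fin 4) (k : ℕ) :
    SmoothK ((_root_.pder μ)^[k] f) := by
  induction k with
  | zero => exact hf
  | succ k ih => rw [Function.iterate_succ_apply']; exact ih.pder μ

/-- Coordinate derivatives of a smooth function commute on the coordinate domain. -/
lemma SmoothK.comm {f : ℝ → ℝ → ℝ → ℝ → ℝ} (hf : SmoothK f) (μ ν : Fin 4)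
    {v r θ φ : ℝ} (hp : (v, r, θ, φ) ∈ kerrDom) :
    _root_.pder μ (_root_.pder ν f) v r θ φ = _root_.pder ν (_root_.pder μ f) v r θ φ := by
  have key : ∀ μ ν : Fin 4, _root_.pder μ (_root_.pder ν f) v r θ φ =
      fderiv ℝ (fderiv ℝ (unc f)) (v, r, θ, φ) (coordVec μ) (coordVec ν) := by
    intro μ ν
    have h1 := (hf.pder ν).pder_eq μ hp
    have h2 : unc (_root_.pder ν f) =ᶠ[nhds (v, r, θ, φ)]
        fun p => fderiv ℝ (unc f) p (coordVec ν) := by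
      filter_upwards [isOpen_kerrDom.mem_nhds hp] with q hq using hf.pder_eq ν hq
    have h3 : DifferentiableAt ℝ (fderiv ℝ (unc f)) (v, r, θ, φ) :=
      ((hf.contDiffAt hp).fderiv_right (m := 1)
        (by rw [one_add_one_eq_two]; exact two_le_smooth)).differentiableAt (by simp)
    change unc (_root_.pder μ (_root_.pder ν f)) (v, r, θ, φ) = _
    rw [h1, h2.fderiv_eq, fderiv_clm_apply h3 (differentiableAt_const _)]
    simp
  rw [key, key]
  exact (hf.contDiffAt hp).isSymmSndFDerivAt (by simpa using two_le_smooth) _ _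

lemma SmoothK.hasDerivAt_v {f : ℝ → ℝ → ℝ → ℝ → ℝ} (hf : SmoothK f) {v r θ φ : ℝ}
    (hp : (v, r, θ, φ) ∈ kerrDom) :
    HasDerivAt (fun t => f t r θ φ) (_root_.pder 0 f v r θ φ) v :=
  (hf.slice0 hp).differentiableAt.hasDerivAt

lemma SmoothK.hasDerivAt_r {f : ℝ → ℝ → ℝ → ℝ → ℝ} (hf : SmoothK f) {v r θ φ : ℝ}
    (hp : (v, r, θ, φ) ∈ kerrDom) :
    HasDerivAt (fun t => f v t θ φ) (_root_.pder 1 f v r θ φ) r :=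
  (hf.slice1 hp).differentiableAt.hasDerivAt

lemma SmoothK.hasDerivAt_θ {f : ℝ → ℝ → ℝ → ℝ → ℝ} (hf : SmoothK f) {v r θ φ : ℝ}
    (hp : (v, r, θ, φ) ∈ kerrDom) :
    HasDerivAt (fun t => f v r t φ) (_root_.pder 2 f v r θ φ) θ :=
  (hf.slice2 hp).differentiableAt.hasDerivAt

/-! ### The commuted wave equation -/

/-- The axisymmetric wave equation commuted with `∂ᵣᵏ`, multiplied by `sin θ`. For `k = 0` the
term with the truncated index `k - 1` carries the coefficient `0`. -/
lemma commuted_wave {M : ℝ} {ψ : ℝ → ℝ → ℝ → ℝ → ℝ} (hs : SmoothK ψ)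
    (hw : ∀ v : ℝ, ∀ r ∈ Ioi (0 : ℝ), ∀ θ ∈ Ioo 0 π, ∀ φ : ℝ, kerrWaveOp M ψ v r θ φ = 0)
    (hax : ∀ v r θ φ, pder 3 ψ v r θ φ = 0) (k : ℕ) (v θ φ : ℝ) (hθ : θ ∈ Ioo 0 π) :
    ∀ r : ℝ, 0 < r →
      sin θ * (M ^ 2 * sin θ ^ 2 * pder 0 (pder 0 ((pder 1)^[k] ψ)) v r θ φ
        + 2 * (r ^ 2 + M ^ 2) * pder 0 (pder 1 ((pder 1)^[k] ψ)) v r θ φ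
        + 2 * (2 * k + 1) * r * pder 0 ((pder 1)^[k] ψ) v r θ φ
        + 2 * (k : ℝ) ^ 2 * pder 0 ((pder 1)^[k - 1] ψ) v r θ φ
        + (r - M) ^ 2 * pder 1 (pder 1 ((pder 1)^[k] ψ)) v r θ φ
        + 2 * (k + 1) * (r - M) * pder 1 ((pder 1)^[k] ψ) v r θ φ
        + k * (k + 1) * (pder 1)^[k] ψ v r θ φ)
      + (cos θ * pder 2 ((pder 1)^[k] ψ) v r θ φ
        + sin θ * pder 2 (pder 2 ((pder 1)^[k] ψ)) v r θ φ) = 0 := by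
  have hsin : sin θ ≠ 0 := (sin_pos_of_mem_Ioo hθ).ne'
  induction k with
  | zero =>
    intro r hr
    have h3 : pder 3 ψ = fun _ _ _ _ => (0 : ℝ) := by
      funext v r θ φ; exact hax v r θ φ
    have hz : ∀ μ : Fin 4, pder μ (fun _ _ _ _ => (0 : ℝ)) = fun _ _ _ _ => (0 : ℝ) := by
      intro μ; funext v r θ φ; simp [pder]
    have hd := (hasDerivAt_sin θ).mul
      ((hs.pder 2).hasDerivAt_θ (mem_kerrDom (v := v) (φ := φ) hr hθ))
    have h := hw v r hr θ hθ φ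
    have hd' : deriv (fun t => sin t * pder 2 ψ v r t φ) θ = _ := hd.deriv
    rw [kerrWaveOp, h3, hz, hz, hz, hd'] at h
    simp only [Function.iterate_zero, id_eq, Nat.cast_zero]
    field_simp at h
    apply mul_left_cancel₀ hsin
    linear_combination h
  | succ k ih =>
    intro r hr
    have hp : (v, r, θ, φ) ∈ kerrDom := mem_kerrDom hr hθ
    set f := (pder 1)^[k] ψ with hfdef
    have hf : SmoothK f := hs.iterate 1 k
    have hg : SmoothK ((pder 1)^[k - 1] ψ) := hs.iterate 1 (k - 1)
    have hid := hasDerivAt_id r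
    have e1 := ((hf.pder 0).pder 0).hasDerivAt_r hp
    have e2 := ((hf.pder 1).pder 0).hasDerivAt_r hp
    have e3 := (hf.pder 0).hasDerivAt_r hp
    have e4 := (hg.pder 0).hasDerivAt_r hp
    have e5 := ((hf.pder 1).pder 1).hasDerivAt_r hp
    have e6 := (hf.pder 1).hasDerivAt_r hp
    have e7 := hf.hasDerivAt_r hp
    have e8 := (hf.pder 2).hasDerivAt_r hp
    have e9 := ((hf.pder 2).pder 2).hasDerivAt_r hp
    have p1 := e1.const_mul (M ^ 2 * sin θ ^ 2)
    have p2 := (((hid.pow 2).add_const (M ^ 2)).const_mul 2).mul e2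
    have p3 := (hid.const_mul (2 * (2 * (k : ℝ) + 1))).mul e3
    have p4 := e4.const_mul (2 * (k : ℝ) ^ 2)
    have p5 := ((hid.sub_const M).pow 2).mul e5
    have p6 := ((hid.sub_const M).const_mul (2 * ((k : ℝ) + 1))).mul e6
    have p7 := e7.const_mul ((k : ℝ) * (k + 1))
    have D := ((((((((p1.add p2).add p3).add p4).add p5).add p6).add p7).const_mul (sin θ)).add
      ((e8.const_mul (cos θ)).add (e9.const_mul (sin θ))))
    have hzero : HasDerivAt (fun _ : ℝ => (0 : ℝ)) 0 r := hasDerivAt_const r 0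
    have D0 := D.unique (hzero.congr_of_eventuallyEq (by
      filter_upwards [isOpen_Ioi.mem_nhds (show r ∈ Ioi (0 : ℝ) from hr)] with t ht
      exact ih t ht))
    -- The radial derivatives are moved to the innermost position.
    have c01 : ∀ {v r θ φ : ℝ}, (v, r, θ, φ) ∈ kerrDom → ∀ (μ : Fin 4) {g}, SmoothK g →
        pder 1 (pder μ g) v r θ φ = pder μ (pder 1 g) v r θ φ :=
      fun hq μ g hg => hg.comm 1 μ hq
    have c2 : ∀ (μ : Fin 4) {g}, SmoothK g →
        pder 1 (pder μ (pder μ g)) v r θ φ = pder μ (pder μ (pder 1 g)) v r θ φ := by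
      intro μ g hg
      rw [c01 hp μ (hg.pder μ)]
      have h1 := ((hg.pder μ).pder 1).pder_eq μ hp
      have h2 := ((hg.pder 1).pder μ).pder_eq μ hp
      have h3 : unc (pder 1 (pder μ g)) =ᶠ[nhds (v, r, θ, φ)] unc (pder μ (pder 1 g)) := by
        filter_upwards [isOpen_kerrDom.mem_nhds hp] with q hq using c01 hq μ hg
      rw [h3.fderiv_eq, ← h2] at h1
      exact h1
    have c4 : (k : ℝ) ^ 2 * pder 1 (pder 0 ((pder 1)^[k - 1] ψ)) v r θ φ
        = (k : ℝ) ^ 2 * pder 0 f v r θ φ := by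
      rcases k with _ | k
      · simp
      · rw [c01 hp 0 hg, ← Function.iterate_succ_apply' (pder 1)]
        rfl
    rw [c2 0 hf, c01 hp 0 (hf.pder 1), c01 hp 0 hf, c01 hp 2 hf, c2 2 hf] at D0
    simp only [Function.iterate_succ_apply', Nat.add_sub_cancel, ← hfdef]
    simp only [id_eq, Pi.pow_apply] at D0
    push_cast
    push_cast at D0
    linear_combination D0 - 2 * sin θ * c4

/-! ### Integration over `(0, π)` -/

lemma SmoothK.continuousOn_θ {f : ℝ → ℝ → ℝ → ℝ → ℝ} (hf : SmoothK f) {r : ℝ} (hr : 0 < r)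
    (v φ : ℝ) : ContinuousOn (fun θ => f v r θ φ) (Ioo 0 π) := fun _ hθ =>
  (hf.hasDerivAt_θ (mem_kerrDom hr hθ)).continuousAt.continuousWithinAt

lemma ae_mem_Ioo : ∀ᵐ θ ∂(MeasureTheory.volume.restrict (uIoc (0 : ℝ) π)), θ ∈ Ioo 0 π := by
  rw [uIoc_of_le pi_pos.le, ← MeasureTheory.restrict_Ioo_eq_restrict_Ioc]
  exact MeasureTheory.ae_restrict_mem measurableSet_Ioo

lemma aestronglyMeasurable_of_continuousOn {F : ℝ → ℝ} (hF : ContinuousOn F (Ioo 0 π)) :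
    MeasureTheory.AEStronglyMeasurable F (MeasureTheory.volume.restrict (uIoc (0 : ℝ) π)) := by
  rw [uIoc_of_le pi_pos.le, ← MeasureTheory.restrict_Ioo_eq_restrict_Ioc]
  exact hF.aestronglyMeasurable measurableSet_Ioo

lemma intervalIntegrable_of_bounded {F : ℝ → ℝ} (hF : ContinuousOn F (Ioo 0 π)) {K : ℝ}
    (hK : ∀ θ ∈ Ioo 0 π, |F θ| ≤ K) :
    IntervalIntegrable F MeasureTheory.volume 0 π := by
  refine (intervalIntegrable_const (c := K)).mono_fun
    (aestronglyMeasurable_of_continuousOn hF) ?_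
  filter_upwards [ae_mem_Ioo] with θ hθ
  rw [norm_eq_abs, norm_eq_abs]
  exact (hK θ hθ).trans (le_abs_self K)

/-- The boundary terms vanish at the poles: a bounded function times `sin θ` tends to `0`
wherever `sin` vanishes. -/
lemma tendsto_sin_mul_zero {b : ℝ → ℝ} {K a : ℝ} {s : Filter ℝ} (hs : s ≤ nhds a)
    (ha : sin a = 0) (hb : ∀ᶠ θ in s, |b θ| ≤ K) :
    Tendsto (fun θ => sin θ * b θ) s (nhds 0) := by
  have h1 : Tendsto sin s (nhds 0) := by
    rw [← ha]; exact (continuous_sin.tendsto a).mono_left hs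
  have h2 : Tendsto (fun θ => |sin θ| * K) s (nhds 0) := by
    simpa using (h1.abs.mul_const K)
  refine squeeze_zero_norm' ?_ h2
  filter_upwards [hb] with θ hθ
  rw [norm_mul, norm_eq_abs, norm_eq_abs]
  exact mul_le_mul_of_nonneg_left hθ (abs_nonneg _)

/-- Vanishing of the integral of a bounded derivative `(sin θ · b)'` over `(0, π)`, for `b`
bounded. -/
lemma integral_deriv_sin_mul_eq_zero {b G : ℝ → ℝ} {K : ℝ} (hb : ∀ θ ∈ Ioo 0 π, |b θ| ≤ K)
    (hd : ∀ θ ∈ Ioo 0 π, HasDerivAt (fun θ => sin θ * b θ) (G θ) θ)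
    (hG : IntervalIntegrable G MeasureTheory.volume 0 π) :
    ∫ θ in (0 : ℝ)..π, G θ = 0 := by
  have := intervalIntegral.integral_eq_sub_of_hasDerivAt_of_tendsto pi_pos hd hG
    (tendsto_sin_mul_zero (b := b) (K := K) (a := 0) nhdsWithin_le_nhds sin_zero (by
      filter_upwards [Ioo_mem_nhdsGT pi_pos] with θ hθ using hb θ hθ))
    (tendsto_sin_mul_zero (b := b) (K := K) (a := π) nhdsWithin_le_nhds sin_pi (by
      filter_upwards [Ioo_mem_nhdsLT pi_pos] with θ hθ using hb θ hθ))
  simpa using this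

/-! ### The conservation laws -/

/-- **Hierarchy of conservation laws along the extremal Kerr horizon.** For every
`M > 0` and `l ∈ ℕ` there exist constants `α, β₀, …, β_l` (depending only on `M`, `l`)
such that for every axisymmetric solution `ψ` of the wave equation on extremal Kerr of
mass `M` with partial derivatives up to order `l+2` bounded and every bounded smooth
axisymmetric spherical harmonic `E_l` of eigenvalue `−l(l+1)` with all derivatives
bounded, the function
`v ↦ ∫₀^π (∂ᵣ^{l+1}ψ + α sin²θ ∂ᵥ∂ᵣ^{l}ψ + Σ_{i=0}^{l} βᵢ ∂ᵣ^{i}ψ)(v, M, θ)·E_l(θ)·sinθ dθ`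
is constant on `ℝ`. -/
theorem hierarchy_of_conservation_laws_extremal_Kerr
    (M : ℝ) (hM : 0 < M) (l : ℕ) :
    ∃ α : ℝ, ∃ β : ℕ → ℝ,
      ∀ ψ : ℝ → ℝ → ℝ → ℝ → ℝ, IsKerrWaveSol M ψ →
        (∀ v r θ φ, pder 3 ψ v r θ φ = 0) →
        (∃ C : ℝ, ∀ L : List (Fin 4), L.length ≤ l + 2 →
          ∀ v : ℝ, ∀ r ∈ Ioi (0 : ℝ), ∀ θ ∈ Ioo 0 π, ∀ φ : ℝ,
            |(L.foldr pder ψ) v r θ φ| ≤ C) →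
        ∀ E : ℝ → ℝ, ContDiffOn ℝ (⊤ : ℕ∞) E (Ioo 0 π) →
          (∀ n : ℕ, ∃ C : ℝ, ∀ θ ∈ Ioo (0:ℝ) π, |deriv^[n] E θ| ≤ C) →
          (∀ θ ∈ Ioo (0:ℝ) π,
            deriv (fun t => sin t * deriv E t) θ / sin θ = -(l : ℝ) * ((l : ℝ) + 1) * E θ) →
          ∀ v₁ v₂ : ℝ,
            (∫ θ in (0:ℝ)..π,
              ((pder 1)^[l + 1] ψ v₁ M θ 0
                + α * sin θ ^ 2 * pder 0 ((pder 1)^[l] ψ) v₁ M θ 0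
                + ∑ i ∈ Finset.range (l + 1), β i * (pder 1)^[i] ψ v₁ M θ 0)
                * E θ * sin θ)
              = ∫ θ in (0:ℝ)..π,
              ((pder 1)^[l + 1] ψ v₂ M θ 0
                + α * sin θ ^ 2 * pder 0 ((pder 1)^[l] ψ) v₂ M θ 0
                + ∑ i ∈ Finset.range (l + 1), β i * (pder 1)^[i] ψ v₂ M θ 0)
                * E θ * sin θ := by
  have hM0 : M ≠ 0 := ne_of_gt hM
  -- These are the coefficients of the `l`-fold commuted equation at `r = M`, divided by `4M²`.
  refine ⟨1 / 4, fun i => (if i = l then (2 * l + 1) / (2 * M) else 0)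
    + (if i = l - 1 then (l : ℝ) ^ 2 / (2 * M ^ 2) else 0), ?_⟩
  intro ψ hψ hax hbd E hE hEb hODE v₁ v₂
  obtain ⟨C, hC⟩ := hbd
  obtain ⟨C₀, hC₀⟩ := hEb 0
  obtain ⟨C₁, hC₁⟩ := hEb 1
  simp only [Function.iterate_zero, Function.iterate_one, id_eq] at hC₀ hC₁
  have hs : SmoothK ψ := hψ.smooth
  have hsum : ∀ a : ℕ → ℝ, ∑ i ∈ Finset.range (l + 1),
      ((if i = l then (2 * l + 1) / (2 * M) else 0)
        + (if i = l - 1 then (l : ℝ) ^ 2 / (2 * M ^ 2) else 0)) * a i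
      = (2 * l + 1) / (2 * M) * a l + (l : ℝ) ^ 2 / (2 * M ^ 2) * a (l - 1) := by
    intro a
    simp only [add_mul, ite_mul, zero_mul, Finset.sum_add_distrib, Finset.sum_ite_eq',
      Finset.mem_range]
    rw [if_pos (by omega), if_pos (by omega)]
  simp only [hsum, Function.iterate_succ_apply']
  have hbound : ∀ (L : List (Fin 4)) (k : ℕ), L.length + k ≤ l + 2 → ∀ v θ, θ ∈ Ioo 0 π →
      |(L.foldr pder ((pder 1)^[k] ψ)) v M θ 0| ≤ C := by
    intro L k hL v θ hθ
    have hrep : ∀ k : ℕ, (pder 1)^[k] ψ = (List.replicate k (1 : Fin 4)).foldr pder ψ := by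
      intro k
      induction k with
      | zero => rfl
      | succ k ih => rw [Function.iterate_succ_apply', ih]; rfl
    rw [hrep, ← List.foldr_append]
    exact hC _ (by simpa using hL) v M hM θ hθ 0
  have hf : SmoothK ((pder 1)^[l] ψ) := hs.iterate 1 l
  have hg : SmoothK ((pder 1)^[l - 1] ψ) := hs.iterate 1 (l - 1)
  have hwave := fun v θ hθ => commuted_wave hs hψ.wave hax l v θ 0 hθ M hM
  have bf : ∀ v θ, θ ∈ Ioo 0 π → |(pder 1)^[l] ψ v M θ 0| ≤ C := hbound [] l (by simp)
  have b1 : ∀ v θ, θ ∈ Ioo 0 π → |pder 1 ((pder 1)^[l] ψ) v M θ 0| ≤ C :=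
    hbound [1] l (by simp; omega)
  have b0 : ∀ v θ, θ ∈ Ioo 0 π → |pder 0 ((pder 1)^[l] ψ) v M θ 0| ≤ C :=
    hbound [0] l (by simp; omega)
  have b2 : ∀ v θ, θ ∈ Ioo 0 π → |pder 2 ((pder 1)^[l] ψ) v M θ 0| ≤ C :=
    hbound [2] l (by simp; omega)
  have b01 : ∀ v θ, θ ∈ Ioo 0 π → |pder 0 (pder 1 ((pder 1)^[l] ψ)) v M θ 0| ≤ C :=
    hbound [0, 1] l (by simp; omega)
  have b00 : ∀ v θ, θ ∈ Ioo 0 π → |pder 0 (pder 0 ((pder 1)^[l] ψ)) v M θ 0| ≤ C :=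
    hbound [0, 0] l (by simp; omega)
  have bg : ∀ v θ, θ ∈ Ioo 0 π → |(pder 1)^[l - 1] ψ v M θ 0| ≤ C :=
    hbound [] (l - 1) (by simp; omega)
  have bg0 : ∀ v θ, θ ∈ Ioo 0 π → |pder 0 ((pder 1)^[l - 1] ψ) v M θ 0| ≤ C :=
    hbound [0] (l - 1) (by simp; omega)
  generalize (pder 1)^[l] ψ = f at *
  generalize (pder 1)^[l - 1] ψ = g at *
  have hC0 : 0 ≤ C := (abs_nonneg _).trans (bf 0 (π / 2) ⟨by positivity, by linarith [pi_pos]⟩)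
  set A : ℝ := (2 * l + 1) / (2 * M) with hA
  set B : ℝ := (l : ℝ) ^ 2 / (2 * M ^ 2) with hB
  have hA0 : 0 ≤ A := by positivity
  have hB0 : 0 ≤ B := by positivity
  have hEd : ∀ θ ∈ Ioo 0 π, HasDerivAt E (deriv E θ) θ := fun θ hθ =>
    ((hE.contDiffAt (isOpen_Ioo.mem_nhds hθ)).differentiableAt (by simp)).hasDerivAt
  have hE' : ContDiffOn ℝ (⊤ : ℕ∞) (deriv E) (Ioo 0 π) :=
    hE.deriv_of_isOpen isOpen_Ioo (by simp)
  have hEd' : ∀ θ ∈ Ioo 0 π, HasDerivAt (deriv E) (deriv (deriv E) θ) θ := fun θ hθ =>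
    ((hE'.contDiffAt (isOpen_Ioo.mem_nhds hθ)).differentiableAt (by simp)).hasDerivAt
  have hODE' : ∀ θ ∈ Ioo 0 π, cos θ * deriv E θ + sin θ * deriv (deriv E) θ
      = -(l : ℝ) * (l + 1) * E θ * sin θ := by
    intro θ hθ
    have h := hODE θ hθ
    have hd : deriv (fun t => sin t * deriv E t) θ = _ :=
      ((hasDerivAt_sin θ).mul (hEd' θ hθ)).deriv
    rw [hd, div_eq_iff (sin_pos_of_mem_Ioo hθ).ne'] at h
    exact h
  -- A uniform bound for the densities of the charge and of its `v`-derivative.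
  have hest : ∀ {θ x y z w : ℝ}, θ ∈ Ioo 0 π → |x| ≤ C → |y| ≤ C → |z| ≤ C → |w| ≤ C →
      |(x + 1 / 4 * sin θ ^ 2 * y + (A * z + B * w)) * E θ * sin θ|
        ≤ (C + 1 / 4 * 1 * C + (A * C + B * C)) * C₀ * 1 := by
    intro θ x y z w hθ hx hy hz hw
    have hsq : |sin θ ^ 2| ≤ 1 := by
      rw [abs_pow]
      exact pow_le_one₀ (abs_nonneg _) (abs_sin_le_one θ)
    have h1 : |1 / 4 * sin θ ^ 2 * y| ≤ 1 / 4 * 1 * C := by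
      rw [abs_mul, abs_mul, abs_of_nonneg (by norm_num : (0 : ℝ) ≤ 1 / 4)]
      gcongr
    have h2 : |A * z + B * w| ≤ A * C + B * C := by
      refine (abs_add_le _ _).trans ?_
      rw [abs_mul, abs_mul, abs_of_nonneg hA0, abs_of_nonneg hB0]
      gcongr
    have h3 : |x + 1 / 4 * sin θ ^ 2 * y + (A * z + B * w)|
        ≤ C + 1 / 4 * 1 * C + (A * C + B * C) :=
      (abs_add_three _ _ _).trans (by gcongr)
    rw [abs_mul, abs_mul]
    have := hC₀ θ hθ
    have hC₀0 : 0 ≤ C₀ := (abs_nonneg _).trans this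
    have := abs_sin_le_one θ
    gcongr
  have hEc : ContinuousOn E (Ioo 0 π) := hE.continuousOn
  have hcont : ∀ {x y z w : ℝ → ℝ}, ContinuousOn x (Ioo 0 π) → ContinuousOn y (Ioo 0 π) →
      ContinuousOn z (Ioo 0 π) → ContinuousOn w (Ioo 0 π) → ContinuousOn (fun θ =>
        (x θ + 1 / 4 * sin θ ^ 2 * y θ + (A * z θ + B * w θ)) * E θ * sin θ) (Ioo 0 π) := by
    intro x y z w hx hy hz hw
    fun_prop
  have cF := fun v => hcont ((hf.pder 1).continuousOn_θ hM v 0) ((hf.pder 0).continuousOn_θ hM v 0)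
    (hf.continuousOn_θ hM v 0) (hg.continuousOn_θ hM v 0)
  have cF' := fun v => hcont (((hf.pder 1).pder 0).continuousOn_θ hM v 0)
    (((hf.pder 0).pder 0).continuousOn_θ hM v 0) ((hf.pder 0).continuousOn_θ hM v 0)
    ((hg.pder 0).continuousOn_θ hM v 0)
  have iF' := fun v => intervalIntegrable_of_bounded (cF' v) fun θ hθ =>
    hest hθ (b01 v θ hθ) (b00 v θ hθ) (b0 v θ hθ) (bg0 v θ hθ)
  -- The commuted equation exhibits the `v`-derivative of the density as a total `θ`-derivative.
  have hzero : ∀ v, ∫ θ in (0 : ℝ)..π,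
      (pder 0 (pder 1 f) v M θ 0 + 1 / 4 * sin θ ^ 2 * pder 0 (pder 0 f) v M θ 0
        + (A * pder 0 f v M θ 0 + B * pder 0 g v M θ 0)) * E θ * sin θ = 0 := by
    intro v
    have h := integral_deriv_sin_mul_eq_zero
      (b := fun θ => E θ * pder 2 f v M θ 0 - deriv E θ * f v M θ 0) (K := C₀ * C + C₁ * C)
      (G := fun θ => -(4 * M ^ 2) *
        ((pder 0 (pder 1 f) v M θ 0 + 1 / 4 * sin θ ^ 2 * pder 0 (pder 0 f) v M θ 0
        + (A * pder 0 f v M θ 0 + B * pder 0 g v M θ 0)) * E θ * sin θ)) ?_ ?_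
      ((iF' v).const_mul _)
    · rw [intervalIntegral.integral_const_mul] at h
      exact (mul_eq_zero.1 h).resolve_left (by simp [hM0])
    · intro θ hθ
      refine (abs_sub _ _).trans ?_
      rw [abs_mul, abs_mul]
      have h0 := hC₀ θ hθ
      have h1 := hC₁ θ hθ
      have := b2 v θ hθ
      have := bf v θ hθ
      have := (abs_nonneg _).trans h0
      have := (abs_nonneg _).trans h1
      gcongr
    · intro θ hθ
      have hp : (v, M, θ, 0) ∈ kerrDom := mem_kerrDom hM hθ
      have hd := (hasDerivAt_sin θ).mul
        (((hEd θ hθ).mul ((hf.pder 2).hasDerivAt_θ hp)).sub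
          ((hEd' θ hθ).mul (hf.hasDerivAt_θ hp)))
      refine hd.congr_deriv ?_
      have hw := hwave v θ hθ
      have ho := hODE' θ hθ
      have hAM : A * (2 * M) = 2 * l + 1 := by rw [hA]; field_simp
      have hBM : B * (2 * M ^ 2) = (l : ℝ) ^ 2 := by rw [hB]; field_simp
      simp only [Pi.sub_apply, Pi.mul_apply]
      linear_combination E θ * hw - f v M θ 0 * ho
        + 2 * M * pder 0 f v M θ 0 * E θ * sin θ * hAM
        + 2 * pder 0 g v M θ 0 * E θ * sin θ * hBM
  have hderiv : ∀ v, HasDerivAt (fun v => ∫ θ in (0 : ℝ)..π,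
      (pder 1 f v M θ 0 + 1 / 4 * sin θ ^ 2 * pder 0 f v M θ 0
        + (A * f v M θ 0 + B * g v M θ 0)) * E θ * sin θ) 0 v := by
    intro v
    refine HasDerivAt.congr_deriv (intervalIntegral.hasDerivAt_integral_of_dominated_loc_of_deriv_le
      (F' := fun v θ => (pder 0 (pder 1 f) v M θ 0
        + 1 / 4 * sin θ ^ 2 * pder 0 (pder 0 f) v M θ 0
        + (A * pder 0 f v M θ 0 + B * pder 0 g v M θ 0)) * E θ * sin θ)
      (bound := fun _ => (C + 1 / 4 * 1 * C + (A * C + B * C)) * C₀ * 1)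
      (s := univ) univ_mem ?_ ?_ ?_ ?_ ?_ ?_).2 (hzero v)
    · exact Eventually.of_forall fun v => aestronglyMeasurable_of_continuousOn (cF v)
    · exact intervalIntegrable_of_bounded (cF v) fun θ hθ =>
        hest hθ (b1 v θ hθ) (b0 v θ hθ) (bf v θ hθ) (bg v θ hθ)
    · exact aestronglyMeasurable_of_continuousOn (cF' v)
    · rw [← MeasureTheory.ae_restrict_iff' measurableSet_uIoc]
      filter_upwards [ae_mem_Ioo] with θ hθ v _
      exact hest hθ (b01 v θ hθ) (b00 v θ hθ) (b0 v θ hθ) (bg0 v θ hθ)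
    · exact intervalIntegrable_const
    · rw [← MeasureTheory.ae_restrict_iff' measurableSet_uIoc]
      filter_upwards [ae_mem_Ioo] with θ hθ v _
      have hp : (v, M, θ, 0) ∈ kerrDom := mem_kerrDom hM hθ
      exact (((((hf.pder 1).hasDerivAt_v hp).add
        (((hf.pder 0).hasDerivAt_v hp).const_mul (1 / 4 * sin θ ^ 2))).add
        (((hf.hasDerivAt_v hp).const_mul A).add ((hg.hasDerivAt_v hp).const_mul B))).mul_const
          (E θ)).mul_const (sin θ)
  exact is_const_of_deriv_eq_zero (fun v => (hderiv v).differentiableAt)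
    (fun v => (hderiv v).deriv) v₁ v₂
end
end
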